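/- arXiv:2205.10300 — 2 statements merged into one kernel-verified Lean document; each statement's English description precedes it below -/
import Mathlib

section
/- Let (α_k)_{k≥1} be a sequence of real numbers with α_k > 0 for every k ≥ 1, and suppose that the series ∑_{k=1}^∞ α_{k+1}² / α_k converges. Then the series ∑_{k=1}^∞ α_k converges. -/
/-- **Convergence of a positive series** (Lemma 7.1 of the paper).
If `(α_k)` is a sequence of positive reals such that `∑ α_{k+1}² / α_k` converges,
then `∑ α_k` converges. -/
theorem summable_of_summable_sq_div
    (α : ℕ → ℝ) (hpos : ∀ k, 0 < α k)
    (h : Summable fun k => (α (k + 1)) ^ 2 / α k) :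
    Summable α := by
  have hnn : ∀ k, 0 ≤ (α (k + 1)) ^ 2 / α k := fun k =>
    div_nonneg (sq_nonneg _) (hpos k).le
  -- AM-GM: `α (k + 1)` is the geometric mean of `α (k + 1) ^ 2 / α k` and `α k`.
  have amgm : ∀ k, α (k + 1) ≤ ((α (k + 1)) ^ 2 / α k + α k) / 2 := by
    intro k
    have hk := hpos k
    have e : (α (k + 1)) ^ 2 / α k + α k - 2 * α (k + 1) = (α (k + 1) - α k) ^ 2 / α k := by
      field_simp
      ring
    have : 0 ≤ (α (k + 1) - α k) ^ 2 / α k := div_nonneg (sq_nonneg _) hk.le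
    linarith
  -- Summing gives `S (n + 1) ≤ α 0 + C / 2 + S n / 2` for the partial sums `S` and the given
  -- sum `C`; the bound below is the fixed point of this recursion.
  refine summable_of_sum_range_le (c := 2 * α 0 + ∑' k, (α (k + 1)) ^ 2 / α k)
    (fun k => (hpos k).le) fun n => ?_
  induction n with
  | zero =>
    have := hpos 0
    have : 0 ≤ ∑' k, (α (k + 1)) ^ 2 / α k := tsum_nonneg hnn
    simp only [Finset.range_zero, Finset.sum_empty]
    linarith
  | succ n ih =>
    rw [Finset.sum_range_succ']
    have h1 := Finset.sum_le_sum fun k (_ : k ∈ Finset.range n) => amgm k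
    rw [← Finset.sum_div, Finset.sum_add_distrib] at h1
    have h2 := h.sum_le_tsum (Finset.range n) fun k _ => hnn k
    linarith
end

section
/- Let (α_k)_{k≥1} be a sequence of real numbers with α_k > 0 for every k ≥ 1, and suppose that S := ∑_{k=1}^∞ α_{k+1}² / α_k is finite. Then ∑_{k=1}^∞ α_k ≤ (α_1^{1/2} + S^{1/2})². -/
/-!
Let `T n` be the sum of the first `n` terms, `a = √(α 0)` and `s = √S`. Writing
`α (k + 1) = (α (k + 1) / √(α k)) * √(α k)`, the Cauchy-Schwarz inequality gives
`T (n + 1) ≤ a ^ 2 + s * √(T n)`. Hence `T n ≤ (a + s) ^ 2` for all `n` by induction, because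
`a ^ 2 + s * (a + s) ≤ (a + s) ^ 2`; both claims follow from this uniform bound.
-/

/-- **Quantitative bound for the positive series** (proof of Lemma 7.1 of the paper).
If `(α_k)` is a sequence of positive reals and `S := ∑ α_{k+1}² / α_k` is finite, then
`∑ α_k` is finite and bounded by `(α_1^{1/2} + S^{1/2})²`.  (Here the sequence is indexed
from `0`, so `α 0` plays the role of `α_1`.) -/
theorem tsum_le_of_summable_sq_div
    (α : ℕ → ℝ) (hpos : ∀ k, 0 < α k)
    (hS : Summable fun k => (α (k + 1)) ^ 2 / α k) :
    Summable α ∧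
      ∑' k, α k ≤ (Real.sqrt (α 0) + Real.sqrt (∑' k, (α (k + 1)) ^ 2 / α k)) ^ 2 := by
  set S := ∑' k, (α (k + 1)) ^ 2 / α k with hSdef
  have hterm : ∀ k, 0 ≤ (α (k + 1)) ^ 2 / α k := fun k =>
    div_nonneg (sq_nonneg _) (hpos k).le
  have hS0 : 0 ≤ S := tsum_nonneg hterm
  have ha := Real.sqrt_nonneg (α 0)
  have hs := Real.sqrt_nonneg S
  have ha2 := Real.sq_sqrt (hpos 0).le
  have hs2 := Real.sq_sqrt hS0
  have key : ∀ n, ∑ k ∈ Finset.range n, α k ≤ (√(α 0) + √S) ^ 2 := by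
    intro n
    induction n with
    | zero => simpa using sq_nonneg (√(α 0) + √S)
    | succ n ih =>
      have hcs : (∑ k ∈ Finset.range n, α (k + 1)) ^ 2 ≤
          (∑ k ∈ Finset.range n, (α (k + 1)) ^ 2 / α k) * ∑ k ∈ Finset.range n, α k :=
        Finset.sum_sq_le_sum_mul_sum_of_sq_le_mul _ (fun k _ => hterm k)
          (fun k _ => (hpos k).le) (fun k _ => (div_mul_cancel₀ _ (hpos k).ne').ge)
      have hle : (∑ k ∈ Finset.range n, (α (k + 1)) ^ 2 / α k) ≤ S :=
        hS.sum_le_tsum _ (fun k _ => hterm k)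
      have hT : 0 ≤ ∑ k ∈ Finset.range n, α k := Finset.sum_nonneg fun k _ => (hpos k).le
      have hsq : (∑ k ∈ Finset.range n, α (k + 1)) ^ 2 ≤ (√S * (√(α 0) + √S)) ^ 2 := by
        rw [mul_pow, hs2]
        exact hcs.trans (mul_le_mul hle ih hT hS0)
      have htail := abs_le_of_sq_le_sq' hsq (by positivity) |>.2
      rw [Finset.sum_range_succ']
      nlinarith [mul_nonneg ha hs]
  exact ⟨summable_of_sum_range_le (fun k => (hpos k).le) key,
    Real.tsum_le_of_sum_range_le (fun k => (hpos k).le) key⟩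
end
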